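/- Let 1 < j < k ≤ n with k ≥ 5, and set d = k−j, q = ⌊k/d⌋, r = k mod d. Suppose r = 2. Then the order of f_1 f_{j−1} f_{k−1} in S_n equals: q(q+1) if d = 3, or if d ≥ 4 and q is odd; and 2q(q+1) if d ≥ 4 and q is even. -/

import Mathlib

/-- The pancake generator `f_m` of the symmetric group `S_n` on `{1,…,n}`, modeled as
`Equiv.Perm (Fin n)` (positions `0`-indexed): it reverses the first `m+1` entries, i.e.
it sends the position `a` to `m - a` whenever `a ≤ m` (and `m < n`), and fixes all other
positions.  (In `1`-indexed terms, `f_m a = m + 2 - a` for `1 ≤ a ≤ m+1` and `f_m a = a`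
for `m + 1 < a ≤ n`.) -/
def pancake (n m : ℕ) : Equiv.Perm (Fin n) :=
  Function.Involutive.toPerm
    (fun a => if h : (a : ℕ) ≤ m ∧ m < n then
        ⟨m - (a : ℕ), Nat.lt_of_le_of_lt (Nat.sub_le m a) h.2⟩ else a)
    (by
      intro a
      dsimp only
      by_cases h : (a : ℕ) ≤ m ∧ m < n
      · rw [dif_pos h, dif_pos ⟨Nat.sub_le m (a : ℕ), h.2⟩]
        exact Fin.ext (Nat.sub_sub_self h.1)
      · rw [dif_neg h, dif_neg h])

namespace PancakeTriple

open Function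

/-- The action of `f_1 f_{j-1} f_{k-1}` on positions, where `d = k - j`
and `k ≡ 2` modulo `d ≥ 3`. -/
def step (d k a : ℕ) : ℕ :=
  if a = d then 1 else if a = d + 1 then 0 else if a < d then k - 1 - a
  else if a < k then a - d else a

lemma pancake_val {n m : ℕ} (hm : m < n) (a : Fin n) :
    ((pancake n m a : Fin n) : ℕ) = if (a : ℕ) ≤ m then m - a else a := by
  change ((if h : (a : ℕ) ≤ m ∧ m < n then
        (⟨m - (a : ℕ), Nat.lt_of_le_of_lt (Nat.sub_le m a) h.2⟩ : Fin n) else a : Fin n) : ℕ) = _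
  by_cases h : (a : ℕ) ≤ m <;> simp [h, hm]

lemma triple_val {n d p k : ℕ} (hd : 3 ≤ d) (hk : k = (p + 1) * d + 2) (hkn : k ≤ n)
    (a : Fin n) :
    (((pancake n 1 * pancake n (k - d - 1) * pancake n (k - 1)) a : Fin n) : ℕ) =
      step d k a := by
  have h : k = p * d + d + 2 := by rw [hk]; ring
  simp only [Equiv.Perm.mul_apply]
  rw [pancake_val (by omega), pancake_val (by omega), pancake_val (by omega)]
  unfold step
  split_ifs <;> omega

lemma triple_pow_val {n d p k : ℕ} (hd : 3 ≤ d) (hk : k = (p + 1) * d + 2) (hkn : k ≤ n)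
    (m : ℕ) (a : Fin n) :
    ((((pancake n 1 * pancake n (k - d - 1) * pancake n (k - 1)) ^ m) a : Fin n) : ℕ) =
      (step d k)^[m] a := by
  induction m with
  | zero => rfl
  | succ m ih => rw [pow_succ', Equiv.Perm.mul_apply, triple_val hd hk hkn, ih,
      iterate_succ_apply']

lemma step_iterate_add_mul {d k y : ℕ} (hy : 2 ≤ y) (t : ℕ) (h : y + t * d < k) :
    (step d k)^[t] (y + t * d) = y := by
  induction t with
  | zero => simp
  | succ t ih =>
    rw [Nat.succ_mul] at h ⊢
    have e : step d k (y + (t * d + d)) = y + t * d := by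
      unfold step; split_ifs <;> omega
    rw [iterate_succ_apply, e, ih (by omega)]

lemma step_iterate_of_add_eq {d k x y t : ℕ} (hx : x = y + t * d) (hy : 2 ≤ y) (h : x < k) :
    (step d k)^[t] x = y := by
  subst hx; exact step_iterate_add_mul hy t h

lemma step_iterate_top_zero {d p k : ℕ} (hd : 3 ≤ d) (hk : k = (p + 1) * d + 2) :
    (step d k)^[p + 1] (d + p * d) = 1 := by
  have h : k = p * d + d + 2 := by rw [hk]; ring
  rw [iterate_succ_apply', step_iterate_add_mul (by omega) _ (by omega)]
  simp [step]

lemma step_iterate_top_one {d p k : ℕ} (hd : 3 ≤ d) (hk : k = (p + 1) * d + 2) :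
    (step d k)^[p + 1] (d + 1 + p * d) = 0 := by
  have h : k = p * d + d + 2 := by rw [hk]; ring
  rw [iterate_succ_apply', step_iterate_add_mul (by omega) _ (by omega)]
  simp [step]

lemma step_iterate_top {d p k : ℕ} (hk : k = (p + 1) * d + 2)
    {c : ℕ} (hc : 2 ≤ c) (hcd : c < d) :
    (step d k)^[p + 1] (c + p * d) = d + 1 - c + p * d := by
  have h : k = p * d + d + 2 := by rw [hk]; ring
  rw [iterate_succ_apply', step_iterate_add_mul (by omega) _ (by omega)]
  unfold step; split_ifs <;> omega

lemma isPeriodicPt_top_zero {d p k : ℕ} (hd : 3 ≤ d) (hk : k = (p + 1) * d + 2) :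
    IsPeriodicPt (step d k) (p + 2) (d + p * d) := by
  have h : k = p * d + d + 2 := by rw [hk]; ring
  rw [IsPeriodicPt, IsFixedPt, iterate_succ_apply', step_iterate_top_zero hd hk]
  unfold step; split_ifs <;> omega

lemma isPeriodicPt_top_one {d p k : ℕ} (hd : 3 ≤ d) (hk : k = (p + 1) * d + 2) :
    IsPeriodicPt (step d k) (p + 2) (d + 1 + p * d) := by
  have h : k = p * d + d + 2 := by rw [hk]; ring
  rw [IsPeriodicPt, IsFixedPt, iterate_succ_apply', step_iterate_top_one hd hk]
  unfold step
  rw [if_neg (by omega), if_neg (by omega), if_pos (by omega)]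
  omega

lemma isPeriodicPt_top {d p k : ℕ} (hk : k = (p + 1) * d + 2)
    {c : ℕ} (hc : 2 ≤ c) (hcd : c < d) :
    IsPeriodicPt (step d k) (2 * (p + 1)) (c + p * d) := by
  rw [IsPeriodicPt, IsFixedPt, two_mul, iterate_add_apply, step_iterate_top hk hc hcd,
    step_iterate_top hk (by omega) (by omega)]
  omega

lemma isPeriodicPt_of_top {d p k : ℕ} (hd : 3 ≤ d) (hk : k = (p + 1) * d + 2)
    {N : ℕ} (h₁ : p + 2 ∣ N)
    (h₂ : ∀ c, 2 ≤ c → c < d → IsPeriodicPt (step d k) N (c + p * d)) (a : ℕ) :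
    IsPeriodicPt (step d k) N a := by
  have h : k = p * d + d + 2 := by rw [hk]; ring
  have h0 := (isPeriodicPt_top_zero hd hk).trans_dvd h₁
  have h1 := (isPeriodicPt_top_one hd hk).trans_dvd h₁
  by_cases hak : k ≤ a
  · apply IsFixedPt.isPeriodicPt
    unfold IsFixedPt step; split_ifs <;> omega
  have hc : a % d < d := Nat.mod_lt _ (by omega)
  have ha : a = a % d + a / d * d := (Nat.mod_add_div' a d).symm
  generalize a % d = c at hc ha
  generalize a / d = s at ha
  by_cases hc2 : 2 ≤ c
  · have hs : s ≤ p := by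
      by_contra! hs
      have := Nat.mul_le_mul_right d hs
      rw [Nat.succ_mul] at this
      omega
    obtain ⟨t, rfl⟩ := Nat.exists_eq_add_of_le hs
    have e : (step d k)^[t] (c + (s + t) * d) = a := by
      rw [Nat.add_mul] at h ⊢
      exact step_iterate_of_add_eq (by omega) (by omega) (by omega)
    exact e ▸ (h₂ c hc2 hc).apply_iterate t
  have hs : s ≤ p + 1 := by
    by_contra! hs
    have := Nat.mul_le_mul_right d hs
    simp only [Nat.succ_mul] at this
    omega
  rcases Nat.eq_zero_or_pos s with rfl | hs0
  · obtain rfl | rfl : a = 1 ∨ a = 0 := by omega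
    · exact step_iterate_top_zero hd hk ▸ h0.apply_iterate (p + 1)
    · exact step_iterate_top_one hd hk ▸ h1.apply_iterate (p + 1)
  obtain ⟨s, rfl⟩ := Nat.exists_eq_succ_of_ne_zero hs0.ne'
  obtain ⟨t, rfl⟩ := Nat.exists_eq_add_of_le (Nat.le_of_succ_le_succ hs)
  simp only [Nat.succ_mul, Nat.add_mul] at *
  obtain rfl | rfl : c = 0 ∨ c = 1 := by omega
  · have e : (step d k)^[t] (d + (s * d + t * d)) = a :=
      step_iterate_of_add_eq (by omega) (by omega) (by omega)
    exact e ▸ h0.apply_iterate t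
  · have e : (step d k)^[t] (d + 1 + (s * d + t * d)) = a :=
      step_iterate_of_add_eq (by omega) (by omega) (by omega)
    exact e ▸ h1.apply_iterate t

lemma iterate_top_ne {d p k : ℕ} (hd : 3 ≤ d) (hk : k = (p + 1) * d + 2)
    {c t : ℕ} (hc : 2 ≤ c) (hck : c + p * d < k) (ht : 0 < t) (htp : t ≤ p) :
    (step d k)^[t] (c + p * d) ≠ c + p * d := by
  obtain ⟨s, rfl⟩ := Nat.exists_eq_add_of_le htp
  have : 0 < t * d := Nat.mul_pos ht (by omega)
  rw [Nat.add_mul] at *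
  rw [step_iterate_of_add_eq (y := c + s * d) (by omega) (by omega) hck]
  omega

lemma dvd_of_isPeriodicPt {f : ℕ → ℕ} {x N m : ℕ} (hN : 0 < N) (hx : IsPeriodicPt f N x)
    (hne : ∀ t, 0 < t → t < N → f^[t] x ≠ x) (hm : IsPeriodicPt f m x) : N ∣ m := by
  have hle : N ≤ minimalPeriod f x := by
    by_contra! hlt
    exact hne _ (hx.minimalPeriod_pos hN) hlt (isPeriodicPt_minimalPeriod f x)
  rw [← (hx.minimalPeriod_le hN).antisymm hle]
  exact hm.minimalPeriod_dvd

lemma succ_dvd_of_isPeriodicPt {d p k : ℕ} (hd : 3 ≤ d) (hk : k = (p + 1) * d + 2)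
    {m : ℕ} (hm : IsPeriodicPt (step d k) m (d + p * d)) :
    p + 2 ∣ m := by
  have h : k = p * d + d + 2 := by rw [hk]; ring
  refine dvd_of_isPeriodicPt (by omega) (isPeriodicPt_top_zero hd hk) (fun t h0 ht => ?_) hm
  rcases Nat.lt_or_ge p t with hpt | htp
  · obtain rfl : t = p + 1 := by omega
    rw [step_iterate_top_zero hd hk]
    omega
  · exact iterate_top_ne hd hk (by omega) (by omega) h0 htp

lemma dvd_of_isPeriodicPt_of_eq_three {d p k : ℕ} (hd : 3 ≤ d) (hk : k = (p + 1) * d + 2)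
    (h3 : d = 3) {m : ℕ}
    (hm : IsPeriodicPt (step d k) m (2 + p * d)) : p + 1 ∣ m := by
  have h : k = p * d + d + 2 := by rw [hk]; ring
  refine dvd_of_isPeriodicPt (by omega) ?_ (fun t h0 ht => ?_) hm
  · rw [IsPeriodicPt, IsFixedPt, step_iterate_top hk le_rfl (by omega), h3]
  · exact iterate_top_ne hd hk le_rfl (by omega) h0 (by omega)

lemma two_mul_dvd_of_isPeriodicPt {d p k : ℕ} (hd : 3 ≤ d) (hk : k = (p + 1) * d + 2)
    (h4 : 4 ≤ d) {m : ℕ}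
    (hm : IsPeriodicPt (step d k) m (2 + p * d)) : 2 * (p + 1) ∣ m := by
  have h : k = p * d + d + 2 := by rw [hk]; ring
  refine dvd_of_isPeriodicPt (by omega) (isPeriodicPt_top hk le_rfl (by omega))
    (fun t h0 ht => ?_) hm
  rcases Nat.lt_or_ge p t with hpt | htp
  · obtain ⟨u, rfl⟩ := Nat.exists_eq_add_of_le' (Nat.succ_le_of_lt hpt)
    obtain ⟨s, rfl⟩ := Nat.exists_eq_add_of_le (show u ≤ p by omega)
    rw [Nat.succ_eq_add_one, iterate_add_apply, step_iterate_top hk le_rfl (by omega)]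
    have : 0 < u * d ∨ u = 0 := by
      rcases Nat.eq_zero_or_pos u with rfl | hu
      · simp
      · exact Or.inl (Nat.mul_pos hu (by omega))
    rw [Nat.add_mul] at *
    rw [step_iterate_of_add_eq (y := d - 1 + s * d) (by omega) (by omega) (by omega)]
    rcases this with hu | rfl
    · rcases Nat.eq_zero_or_pos u with rfl | hu'
      · simp at hu
      · have := Nat.mul_le_mul_right d hu'
        omega
    · omega
  · exact iterate_top_ne hd hk le_rfl (by omega) h0 htp

lemma orderOf_triple_dvd {d p k : ℕ} (hd : 3 ≤ d) (hk : k = (p + 1) * d + 2)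
    {n N : ℕ} (hkn : k ≤ n)
    (hN : ∀ a, IsPeriodicPt (step d k) N a) :
    orderOf (pancake n 1 * pancake n (k - d - 1) * pancake n (k - 1)) ∣ N := by
  apply orderOf_dvd_of_pow_eq_one
  ext a
  rw [triple_pow_val hd hk hkn]
  exact hN a

lemma isPeriodicPt_orderOf_triple {d p k : ℕ} (hd : 3 ≤ d) (hk : k = (p + 1) * d + 2)
    {n a : ℕ} (hkn : k ≤ n) (ha : a < n) :
    IsPeriodicPt (step d k)
      (orderOf (pancake n 1 * pancake n (k - d - 1) * pancake n (k - 1))) a := by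
  have := triple_pow_val hd hk hkn
    (orderOf (pancake n 1 * pancake n (k - d - 1) * pancake n (k - 1))) ⟨a, ha⟩
  rw [pow_orderOf_eq_one] at this
  exact this.symm

end PancakeTriple

open PancakeTriple in
/-- Let `1 < j < k ≤ n` with `k ≥ 5`, and set `d = k - j`, `q = ⌊k/d⌋`, `r = k mod d`.
Suppose `r = 2`.  Then the order of `f_1 f_{j-1} f_{k-1}` in `S_n` is: `q(q+1)` if
`d = 3`, or if `d ≥ 4` and `q` is odd; and `2q(q+1)` if `d ≥ 4` and `q` is even. -/
theorem order_pancake_one_triple_r_two (n j k d q r : ℕ) (hj : 1 < j) (hjk : j < k)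
    (hkn : k ≤ n) (hk5 : 5 ≤ k) (hd : d = k - j) (hq : q = k / d) (hr : r = k % d)
    (hr2 : r = 2) :
    (d = 3 ∨ (4 ≤ d ∧ Odd q) →
      orderOf (pancake n 1 * pancake n (j - 1) * pancake n (k - 1)) = q * (q + 1)) ∧
    (4 ≤ d ∧ Even q →
      orderOf (pancake n 1 * pancake n (j - 1) * pancake n (k - 1)) =
        2 * q * (q + 1)) := by
  have hdpos : 0 < d := by omega
  have hd3 : 3 ≤ d := by
    have := Nat.mod_lt k hdpos
    omega
  have hq1 : 0 < q := hq ▸ Nat.div_pos (by omega) hdpos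
  have hkq : k = q * d + 2 := by
    rw [← hr2, hr, hq, Nat.div_add_mod']
  obtain ⟨p, rfl⟩ := Nat.exists_eq_succ_of_ne_zero hq1.ne'
  rw [Nat.succ_eq_add_one] at *
  have hj' : j = k - d := by omega
  have hexp : k = p * d + d + 2 := by rw [hkq]; ring
  subst hj'
  have hA := succ_dvd_of_isPeriodicPt hd3 hkq
    (isPeriodicPt_orderOf_triple hd3 hkq hkn (a := d + p * d) (by omega))
  have hB := isPeriodicPt_orderOf_triple hd3 hkq hkn (a := 2 + p * d) (by omega)
  have hcop : Nat.Coprime (p + 1) (p + 1 + 1) := by simp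
  constructor
  · intro hcase
    apply Nat.dvd_antisymm
    · refine orderOf_triple_dvd hd3 hkq hkn
        (isPeriodicPt_of_top hd3 hkq (Dvd.intro_left _ rfl) fun c hc hcd => ?_)
      rcases hcase with h3 | ⟨-, hodd⟩
      · obtain rfl : c = 2 := by omega
        refine Function.IsPeriodicPt.trans_dvd (m := p + 1) ?_ (Dvd.intro _ rfl)
        rw [Function.IsPeriodicPt, Function.IsFixedPt, step_iterate_top hkq hc hcd, h3]
      · refine (isPeriodicPt_top hkq hc hcd).trans_dvd ?_
        rw [mul_comm 2]
        exact Nat.mul_dvd_mul_left _ hodd.add_one.two_dvd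
    · refine hcop.mul_dvd_of_dvd_of_dvd ?_ hA
      rcases hcase with h3 | ⟨h4, -⟩
      · exact dvd_of_isPeriodicPt_of_eq_three hd3 hkq h3 hB
      · exact (Dvd.intro_left _ rfl).trans (two_mul_dvd_of_isPeriodicPt hd3 hkq h4 hB)
  · rintro ⟨h4, heven⟩
    apply Nat.dvd_antisymm
    · exact orderOf_triple_dvd hd3 hkq hkn
        (isPeriodicPt_of_top hd3 hkq (Dvd.intro_left _ rfl) fun c hc hcd =>
          (isPeriodicPt_top hkq hc hcd).trans_dvd (Dvd.intro _ rfl))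
    · have h2 : Nat.Coprime 2 (p + 1 + 1) := heven.add_one.coprime_two_left
      exact (h2.mul_left hcop).mul_dvd_of_dvd_of_dvd
        (two_mul_dvd_of_isPeriodicPt hd3 hkq h4 hB) hA
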